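/- Let Ω := ℂ ∖ ((−∞,−1] ∪ [1,∞)). For x ∈ [−1,1] let f_x(p) := (1 − px)^{−1/2}, using the principal branch of the square root (note 1 − px ∉ (−∞,0] for p ∈ Ω). Then f_x is analytic on Ω and (A f_x)(p) = (1 − px)^{−1} for every p ∈ Ω. -/

import Mathlib

open MeasureTheory Filter Topology

/-- `G_f(p) = ∫_0^1 f(pt)(1−t)^{−1/2} dt`. -/
noncomputable def Gop (f : ℂ → ℂ) (p : ℂ) : ℂ :=
  ∫ t in (0:ℝ)..1, f (p * (t:ℂ)) * (((1 - t) ^ (-(1/2) : ℝ) : ℝ) : ℂ)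

/-- `(Af)(p) = G_f(p)/2 + p·G_f'(p)`, realizing `√p (d/dp)[p^{−1/2} * f](p)`. -/
noncomputable def Aop (f : ℂ → ℂ) (p : ℂ) : ℂ :=
  Gop f p / 2 + p * deriv (Gop f) p

/-- `Ω = ℂ ∖ ((−∞,−1] ∪ [1,∞))`. -/
def Omega : Set ℂ :=
  (Complex.ofReal '' (Set.Iic (-1) ∪ Set.Ici 1))ᶜ


lemma Omega_slit {x : ℝ} (hx : x ∈ Set.Icc (-1:ℝ) 1) {p : ℂ} (hp : p ∈ Omega) {t : ℝ}
    (ht : t ∈ Set.Icc (0:ℝ) 1) : (1:ℂ) - p * (t:ℂ) * (x:ℂ) ∈ Complex.slitPlane := by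
  rw [Complex.mem_slitPlane_iff]
  have hs : |t * x| ≤ 1 := by
    rw [abs_mul]
    exact mul_le_one₀ (abs_le.2 ⟨by linarith [ht.1], ht.2⟩) (abs_nonneg _) (abs_le.2 hx)
  have e : (1:ℂ) - p * (t:ℂ) * (x:ℂ) = 1 - p * ((t * x : ℝ) : ℂ) := by push_cast; ring
  rw [e]
  generalize t * x = s at hs
  by_cases him : p.im = 0
  · left
    have h1 : |p.re| < 1 := by
      by_contra hcon
      apply hp
      refine ⟨p.re, ?_, Complex.ext (by simp) (by simp [him])⟩
      rcases le_abs.1 (not_lt.1 hcon) with h | h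
      · exact Or.inr h
      · exact Or.inl (by simp only [Set.mem_Iic]; linarith)
    have h2 : |p.re * s| < 1 := by
      rw [abs_mul]
      nlinarith [abs_nonneg p.re, abs_nonneg s]
    have := (abs_lt.1 h2).2
    simp [him]
    linarith
  · by_cases h0 : s = 0
    · left; simp [h0]
    · right; simp [him, h0]

lemma Omega_open : IsOpen Omega := by
  unfold Omega
  rw [isOpen_compl_iff]
  exact Complex.isometry_ofReal.isClosedEmbedding.isClosedMap _ (isClosed_Iic.union isClosed_Ici)

lemma weight_int : IntervalIntegrable (fun t : ℝ => (1 - t) ^ (-(1/2) : ℝ)) volume 0 1 := by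
  have h := (intervalIntegral.intervalIntegrable_rpow' (a := 0) (b := 1)
    (r := -(1/2)) (by norm_num)).comp_sub_left 1
  simpa using h.symm

lemma weightC_int : IntervalIntegrable (fun t : ℝ => (((1 - t) ^ (-(1/2) : ℝ) : ℝ) : ℂ))
    volume 0 1 := by
  have := weight_int
  rw [intervalIntegrable_iff] at this ⊢
  exact this.ofReal

lemma cont_pow {x : ℝ} (hx : x ∈ Set.Icc (-1:ℝ) 1) (c : ℂ) {p : ℂ} (hp : p ∈ Omega) :
    ContinuousOn (fun t : ℝ => ((1:ℂ) - p * (t:ℂ) * (x:ℂ)) ^ c) (Set.uIcc 0 1) := by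
  rw [Set.uIcc_of_le zero_le_one]
  apply ContinuousOn.cpow_const
  · fun_prop
  · intro t ht
    exact Omega_slit hx hp ht

lemma Gop_deriv {x : ℝ} (hx : x ∈ Set.Icc (-1:ℝ) 1) {p : ℂ} (hp : p ∈ Omega) :
    HasDerivAt (Gop (fun p : ℂ => ((1:ℂ) - p * (x:ℂ)) ^ (-(1/2) : ℂ)))
      (∫ t in (0:ℝ)..1, (((t:ℂ) * x / 2) * ((1:ℂ) - p * (t:ℂ) * (x:ℂ)) ^ (-(3/2) : ℂ)) *
        (((1 - t) ^ (-(1/2) : ℝ) : ℝ) : ℂ)) p := by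
  obtain ⟨ε, hε, hsub⟩ := Metric.nhds_basis_closedBall.mem_iff.1 (Omega_open.mem_nhds hp)
  have hK : IsCompact (Metric.closedBall p ε ×ˢ Set.Icc (0:ℝ) 1) :=
    (isCompact_closedBall p ε).prod isCompact_Icc
  have hc : ContinuousOn (fun z : ℂ × ℝ => ((z.2:ℂ) * x / 2) *
      ((1:ℂ) - z.1 * (z.2:ℂ) * (x:ℂ)) ^ (-(3/2) : ℂ)) (Metric.closedBall p ε ×ˢ Set.Icc (0:ℝ) 1) := by
    apply ContinuousOn.mul
    · fun_prop
    · apply ContinuousOn.cpow_const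
      · fun_prop
      · rintro ⟨z, t⟩ ⟨hz, ht⟩
        exact Omega_slit hx (hsub hz) ht
  obtain ⟨C, hC⟩ := hK.exists_bound_of_continuousOn hc
  have hI : ∀ t ∈ Set.uIoc (0:ℝ) 1, t ∈ Set.Icc (0:ℝ) 1 := by
    intro t ht
    rw [Set.uIoc_of_le zero_le_one] at ht
    exact ⟨ht.1.le, ht.2⟩
  have key : ∀ z ∈ Omega, IntervalIntegrable (fun t : ℝ => ((1:ℂ) - z * (t:ℂ) * (x:ℂ)) ^ (-(1/2) : ℂ)
      * (((1 - t) ^ (-(1/2) : ℝ) : ℝ) : ℂ)) volume 0 1 := fun z hz =>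
    weightC_int.continuousOn_mul (cont_pow hx _ hz)
  refine (intervalIntegral.hasDerivAt_integral_of_dominated_loc_of_deriv_le
    (bound := fun t => C * (1 - t) ^ (-(1/2) : ℝ))
    (F := fun (z : ℂ) (t : ℝ) => ((1:ℂ) - z * (t:ℂ) * (x:ℂ)) ^ (-(1/2) : ℂ)
      * (((1 - t) ^ (-(1/2) : ℝ) : ℝ) : ℂ))
    (F' := fun (z : ℂ) (t : ℝ) => (((t:ℂ) * x / 2) * ((1:ℂ) - z * (t:ℂ) * (x:ℂ)) ^ (-(3/2) : ℂ)) *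
        (((1 - t) ^ (-(1/2) : ℝ) : ℝ) : ℂ))
    (Metric.closedBall_mem_nhds p hε) ?_ (key p hp) ?_ ?_ (weight_int.const_mul C) ?_).2
  · filter_upwards [Omega_open.mem_nhds hp] with z hz
    have := key z hz
    rw [intervalIntegrable_iff] at this
    exact this.aestronglyMeasurable
  · have : IntervalIntegrable (fun t : ℝ => (((t:ℂ) * x / 2) * ((1:ℂ) - p * (t:ℂ) * (x:ℂ)) ^ (-(3/2) : ℂ)) *
        (((1 - t) ^ (-(1/2) : ℝ) : ℝ) : ℂ)) volume 0 1 := by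
      apply weightC_int.continuousOn_mul
      apply ContinuousOn.mul
      · fun_prop
      · exact cont_pow hx _ hp
    rw [intervalIntegrable_iff] at this
    exact this.aestronglyMeasurable
  · refine Eventually.of_forall fun t ht z hz => ?_
    have ht := hI t ht
    rw [norm_mul, Complex.norm_real, Real.norm_of_nonneg (Real.rpow_nonneg (by linarith [ht.2]) _)]
    exact mul_le_mul_of_nonneg_right (hC (z, t) ⟨hz, ht⟩) (Real.rpow_nonneg (by linarith [ht.2]) _)
  · refine Eventually.of_forall fun t ht z hz => ?_
    have ht := hI t ht
    apply HasDerivAt.mul_const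
    have h1 : HasDerivAt (fun z : ℂ => (1:ℂ) - z * (t:ℂ) * (x:ℂ)) (-((t:ℂ) * x)) z := by
      have := (((hasDerivAt_id z).mul_const (t:ℂ)).mul_const (x:ℂ)).const_sub 1
      simpa using this
    refine (h1.cpow_const (c := -(1/2)) (Omega_slit hx (hsub hz) ht)).congr_deriv ?_
    rw [show (-(1/2) - 1 : ℂ) = -(3/2) by norm_num]
    ring

lemma final_int {x : ℝ} (hx : x ∈ Set.Icc (-1:ℝ) 1) {p : ℂ} (hp : p ∈ Omega) :
    ∫ t in (0:ℝ)..1, ((p * x - 1) / 2 * ((1:ℂ) - p * (t:ℂ) * (x:ℂ)) ^ (-(3/2) : ℂ)) *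
        (((1 - t) ^ (-(1/2) : ℝ) : ℝ) : ℂ) = -1 := by
  have := intervalIntegral.integral_eq_sub_of_hasDerivAt_of_le (a := 0) (b := 1) zero_le_one
    (f := fun t : ℝ => ((1:ℂ) - p * (t:ℂ) * (x:ℂ)) ^ (-(1/2) : ℂ) *
      (((1 - t) ^ ((1/2) : ℝ) : ℝ) : ℂ))
    (f' := fun t : ℝ => ((p * x - 1) / 2 * ((1:ℂ) - p * (t:ℂ) * (x:ℂ)) ^ (-(3/2) : ℂ)) *
        (((1 - t) ^ (-(1/2) : ℝ) : ℝ) : ℂ)) ?_ ?_ ?_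
  · rw [this]
    simp
  · apply ContinuousOn.mul
    · have := cont_pow hx (-(1/2)) hp
      rwa [Set.uIcc_of_le zero_le_one] at this
    · apply Continuous.continuousOn
      apply Complex.continuous_ofReal.comp
      exact (continuous_const.sub continuous_id).rpow_const (fun _ => Or.inr (by norm_num))
  · intro t ht
    have hs := Omega_slit hx hp ⟨ht.1.le, ht.2.le⟩
    have h1 : HasDerivAt (fun t : ℝ => (1:ℂ) - p * (t:ℂ) * (x:ℂ)) (-(p * x)) t := by
      have := (((hasDerivAt_id t).ofReal_comp.const_mul p).mul_const (x:ℂ)).const_sub 1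
      simpa using this
    have h2 : HasDerivAt (fun t : ℝ => ((1:ℂ) - p * (t:ℂ) * (x:ℂ)) ^ (-(1/2) : ℂ))
        (-(1/2) * ((1:ℂ) - p * (t:ℂ) * (x:ℂ)) ^ (-(3/2) : ℂ) * (-(p * x))) t := by
      have h3 := (hasDerivAt_id ((1:ℂ) - p * (t:ℂ) * (x:ℂ))).cpow_const (c := -(1/2)) hs
      have := h3.comp t h1
      rw [show (-(1/2) - 1 : ℂ) = -(3/2) by norm_num] at this
      simpa [Function.comp_def] using this
    have ht1 : 0 < 1 - t := by linarith [ht.2]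
    have h4 : HasDerivAt (fun t : ℝ => (1 - t) ^ ((1/2) : ℝ)) (-(1/2) * (1 - t) ^ (-(1/2) : ℝ)) t := by
      have := ((hasDerivAt_id t).const_sub 1).rpow_const (p := 1/2) (Or.inl ht1.ne')
      rw [show (1/2 - 1 : ℝ) = -(1/2) by norm_num] at this
      refine this.congr_deriv ?_
      simp only [id]
      ring
    refine (h2.mul h4.ofReal_comp).congr_deriv ?_
    have e1 : ((1:ℂ) - p * (t:ℂ) * (x:ℂ)) ^ (-(1/2) : ℂ) =
        ((1:ℂ) - p * (t:ℂ) * (x:ℂ)) ^ (-(3/2) : ℂ) * ((1:ℂ) - p * (t:ℂ) * (x:ℂ)) := by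
      rw [show (-(1/2) : ℂ) = -(3/2) + 1 by norm_num, Complex.cpow_add _ _ (Complex.slitPlane_ne_zero hs),
        Complex.cpow_one]
    have e2 : (1 - t) ^ ((1/2) : ℝ) = (1 - t) ^ (-(1/2) : ℝ) * (1 - t) := by
      rw [show ((1/2) : ℝ) = -(1/2) + 1 by norm_num, Real.rpow_add ht1, Real.rpow_one]
      norm_num
    simp only [e1, e2]
    push_cast
    ring
  · apply weightC_int.continuousOn_mul
    exact continuousOn_const.mul (cont_pow hx _ hp)

/-- for `x ∈ [−1,1]`, `f_x(p) = (1−px)^{−1/2}` (principal branch) is analytic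
on `Ω` and `(A f_x)(p) = (1−px)^{−1}` for all `p ∈ Ω`. -/
theorem Aop_of_inverse_sqrt
    (x : ℝ) (hx : x ∈ Set.Icc (-1:ℝ) 1) :
    AnalyticOnNhd ℂ (fun p : ℂ => ((1:ℂ) - p * (x:ℂ)) ^ (-(1/2) : ℂ)) Omega ∧
    ∀ p ∈ Omega,
      Aop (fun p : ℂ => ((1:ℂ) - p * (x:ℂ)) ^ (-(1/2) : ℂ)) p = ((1:ℂ) - p * (x:ℂ))⁻¹ := by
  have hsl : ∀ p ∈ Omega, (1:ℂ) - p * (x:ℂ) ∈ Complex.slitPlane := fun p hp => by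
    simpa using Omega_slit hx hp (t := 1) (by simp)
  constructor
  · intro p hp
    exact (by fun_prop : AnalyticAt ℂ (fun p : ℂ => (1:ℂ) - p * (x:ℂ)) p).cpow analyticAt_const
      (hsl p hp)
  · intro p hp
    have hne := Complex.slitPlane_ne_zero (hsl p hp)
    have hF := final_int hx hp
    unfold Aop
    rw [(Gop_deriv hx hp).deriv]
    unfold Gop
    have i1 : IntervalIntegrable (fun t : ℝ => ((1:ℂ) - p * (t:ℂ) * (x:ℂ)) ^ (-(1/2) : ℂ)
      * (((1 - t) ^ (-(1/2) : ℝ) : ℝ) : ℂ)) volume 0 1 :=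
      weightC_int.continuousOn_mul (cont_pow hx _ hp)
    have i2 : IntervalIntegrable (fun t : ℝ => (((t:ℂ) * x / 2) * ((1:ℂ) - p * (t:ℂ) * (x:ℂ)) ^ (-(3/2) : ℂ)) *
        (((1 - t) ^ (-(1/2) : ℝ) : ℝ) : ℂ)) volume 0 1 := by
      apply weightC_int.continuousOn_mul
      apply ContinuousOn.mul
      · fun_prop
      · exact cont_pow hx _ hp
    rw [← intervalIntegral.integral_div, ← intervalIntegral.integral_const_mul,
      ← intervalIntegral.integral_add (i1.div_const 2) (i2.const_mul p)]
    rw [← mul_left_inj' hne, inv_mul_cancel₀ hne, ← neg_inj, ← hF, ← intervalIntegral.integral_mul_const,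
      ← intervalIntegral.integral_neg]
    apply intervalIntegral.integral_congr
    intro t ht
    rw [Set.uIcc_of_le zero_le_one] at ht
    have hs := Omega_slit hx hp ht
    have e1 : ((1:ℂ) - p * (t:ℂ) * (x:ℂ)) ^ (-(1/2) : ℂ) =
        ((1:ℂ) - p * (t:ℂ) * (x:ℂ)) ^ (-(3/2) : ℂ) * ((1:ℂ) - p * (t:ℂ) * (x:ℂ)) := by
      rw [show (-(1/2) : ℂ) = -(3/2) + 1 by norm_num, Complex.cpow_add _ _ (Complex.slitPlane_ne_zero hs),
        Complex.cpow_one]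
    simp only [e1]
    ring
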